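/- Let n ≥ 2 and let G be a simple graph on Fin n. Suppose at least one of the following holds: (i) every vertex of G has degree at most 3 and G contains no clique on 4 vertices; (ii) the number of vertices of G of degree at least 3 is at most 3; (iii) there exists a vertex u of G such that the induced subgraph of G on the complement of {u} is acyclic (this includes the case where G itself is acyclic). Then there exists a matrix X : Matrix (Fin 2) (Fin n) (ZMod 2) of rank 2 such that every column of X is nonzero and for all j, k with G.Adj j k the j-th and k-th columns of X differ. (Equivalently, a 2^n factorial in blocks of size four exists from which all main effects and all interactions of G are estimable.) -/

import Mathlib

/-!
The three nonzero vectors of `GF(2)²` serve as colours: a proper 3-colouring of `G` is a choice of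
nonzero columns, distinct on adjacent vertices, and two distinct nonzero columns already force rank
two. A constant colouring is proper only for an edgeless graph, where any other colouring will do.

Three vertices of degree at least 3 get distinct colours and the remaining vertices are coloured
greedily; a bipartite graph plus a vertex needs one more colour. The remaining case is Brooks'
theorem, for which we follow Zając's argument. In a minimal counterexample `S` all degrees equal
the number of colours, so some `v` has nonadjacent neighbours `x` and `y`. Prolong the path
`x, v, y` beyond `y` until all neighbours of its end `h` lie on it. If the path covers `S`, give
`x` and `y` the same colour and colour along the path, leaving `v` for the end. Otherwise the
segment from the last neighbour of `h` to `h` closes up to a cycle. Colour the vertices off the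
cycle. If an edge leaves the cycle, there are consecutive `w`, `u` on it such that `w` has a
neighbour `x` off the cycle and `u` has none: give `u` the colour of `x` and go around from `u` to
`w`, which sees the colour of `x` twice. If no edge leaves it, colour the cycle separately.
-/

open Finset

section Lists

variable {β : Type*}

lemma exists_eq_append_cons_of_exists_mem {p : β → Prop} (l : List β) (hl : ∃ a ∈ l, p a) :
    ∃ as b bs, l = as ++ b :: bs ∧ p b ∧ ∀ a ∈ bs, ¬ p a := by
  induction l using List.reverseRecOn with
  | nil => simp at hl
  | append_singleton l a ih =>
    by_cases ha : p a
    · exact ⟨l, a, [], rfl, ha, by simp⟩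
    · obtain ⟨as, b, bs, rfl, hb, hbs⟩ := ih (by grind)
      exact ⟨as, b, bs ++ [a], by simp, hb, by grind⟩

lemma exists_cycle_eq_coe_cons_concat {p : β → Prop} {c : Cycle β} (hp : ∃ a ∈ c, p a)
    (hnp : ∃ a ∈ c, ¬ p a) : ∃ u m w, c = ↑(u :: (m ++ [w])) ∧ ¬ p u ∧ p w := by
  obtain ⟨b, hbc, hb⟩ := hnp
  obtain ⟨l, rfl⟩ : ∃ l : List β, c = ↑(b :: l) := by
    induction c using Quotient.inductionOn' with | _ l
    obtain ⟨s, t, rfl⟩ := List.append_of_mem hbc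
    exact ⟨t ++ s, Cycle.coe_eq_coe.2 List.isRotated_append⟩
  obtain ⟨as, w, bs, rfl, hw, hbs⟩ := exists_eq_append_cons_of_exists_mem (p := p) l (by simp_all)
  have hrot : ((b :: (as ++ w :: bs) : List β) : Cycle β) = ↑(bs ++ b :: (as ++ [w])) := by
    rw [Cycle.coe_eq_coe]
    simpa using List.isRotated_append (l := b :: (as ++ [w])) (l' := bs)
  cases bs with
  | nil => exact ⟨b, as, w, hrot, hb, hw⟩
  | cons u bs => exact ⟨u, bs ++ b :: as, w, by simpa using hrot, hbs u (by simp), hw⟩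

end Lists

variable {V α : Type*} {G : SimpleGraph V}

/-- A partial proper colouring with domain `S`, encoded as a total map `f : V → α` whose values
outside `S` are irrelevant. -/
def IsColoringOn (G : SimpleGraph V) (f : V → α) (S : Set V) : Prop :=
  ∀ u ∈ S, ∀ v ∈ S, G.Adj u v → f u ≠ f v

namespace IsColoringOn

variable {f g : V → α} {S T : Set V} {v w : V}

lemma const (hS : G.IsIndepSet S) (c : α) : IsColoringOn G (fun _ ↦ c) S :=
  fun _ hu _ hv huv ↦ (hS hu hv huv.ne huv).elim

lemma exists_of_induce_coloring [Nonempty α] (C : (G.induce S).Coloring α) :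
    ∃ f : V → α, IsColoringOn G f S := by
  refine ⟨Function.extend Subtype.val C fun _ ↦ Classical.arbitrary α, fun u hu v hv huv ↦ ?_⟩
  have hC (w : S) := Subtype.val_injective.extend_apply C (fun _ ↦ Classical.arbitrary α) w
  rw [hC ⟨u, hu⟩, hC ⟨v, hv⟩]
  exact C.valid huv

lemma colorable [Fintype α] (hf : IsColoringOn G f Set.univ) : G.Colorable (Fintype.card α) :=
  (SimpleGraph.Coloring.mk f fun {u v} ↦ hf u trivial v trivial).colorable

lemma exists_union (hf : IsColoringOn G f S) (hg : IsColoringOn G g T)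
    (hST : ∀ s ∈ S, ∀ t ∈ T, ¬ G.Adj s t) : ∃ k : V → α, IsColoringOn G k (S ∪ T) := by
  classical
  refine ⟨S.piecewise f g, fun a ha b hb hab ↦ ?_⟩
  by_cases haS : a ∈ S <;> by_cases hbS : b ∈ S <;>
    simp only [Set.piecewise, haS, hbS, if_true, if_false]
  · exact hf a haS b hbS hab
  · exact (hST a haS b (hb.resolve_left hbS) hab).elim
  · exact (hST b hbS a (ha.resolve_left haS) hab.symm).elim
  · exact hg a (ha.resolve_left haS) b (hb.resolve_left hbS) hab

lemma exists_insert_of_ne (hf : IsColoringOn G f S) (hv : v ∉ S) {c : α}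
    (hc : ∀ s ∈ S, G.Adj v s → f s ≠ c) :
    ∃ g, IsColoringOn G g (insert v S) ∧ S.EqOn g f ∧ g v = c := by
  classical
  have hne : ∀ s ∈ S, s ≠ v := fun s hs h ↦ hv (h ▸ hs)
  refine ⟨Function.update f v c, ?_, fun s hs ↦ by simp [hne s hs], by simp⟩
  rintro a (rfl | ha) b (rfl | hb) hab
  · exact (G.irrefl hab).elim
  · simpa [hne b hb] using (hc b hb hab).symm
  · simpa [hne a ha] using hc a ha hab.symm
  · simpa [hne a ha, hne b hb] using hf a ha b hb hab

variable [Fintype α]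

lemma exists_insert_of_card_lt (hf : IsColoringOn G f S) (hv : v ∉ S) {N : Finset V}
    (hN : #N < Fintype.card α) (hSN : ∀ s ∈ S, G.Adj v s → ∃ t ∈ N, f t = f s) :
    ∃ g, IsColoringOn G g (insert v S) ∧ S.EqOn g f := by
  classical
  obtain ⟨c, hc⟩ : ∃ c, c ∉ N.image f := by
    simpa [eq_univ_iff_forall] using
      (card_lt_iff_ne_univ (N.image f)).1 (card_image_le.trans_lt hN)
  obtain ⟨g, hg, hgf, -⟩ := hf.exists_insert_of_ne hv (c := c) fun s hs hvs hsc ↦ by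
    obtain ⟨t, ht, hts⟩ := hSN s hs hvs
    exact hc (mem_image.2 ⟨t, ht, hts.trans hsc⟩)
  exact ⟨g, hg, hgf⟩

variable [G.LocallyFinite]

lemma exists_insert_of_degree_lt (hf : IsColoringOn G f S) (hv : v ∉ S)
    (hd : G.degree v < Fintype.card α) : ∃ g, IsColoringOn G g (insert v S) ∧ S.EqOn g f :=
  hf.exists_insert_of_card_lt hv (N := G.neighborFinset v) hd fun s _ hvs ↦ ⟨s, by simpa, rfl⟩

lemma exists_insert_of_adj_notMem (hf : IsColoringOn G f S) (hv : v ∉ S)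
    (hd : G.degree v ≤ Fintype.card α) (hvw : G.Adj v w) (hw : w ∉ S) :
    ∃ g, IsColoringOn G g (insert v S) ∧ S.EqOn g f := by
  classical
  have hwN : w ∈ G.neighborFinset v := by simpa
  refine hf.exists_insert_of_card_lt hv (N := (G.neighborFinset v).erase w)
    ((card_erase_lt_of_mem hwN).trans_le hd) fun s hs hvs ↦ ⟨s, ?_, rfl⟩
  simpa [hvs] using fun h : s = w ↦ hw (h ▸ hs)

lemma exists_insert_of_adj_of_eq {a b : V} (hf : IsColoringOn G f S) (hv : v ∉ S)
    (hd : G.degree v ≤ Fintype.card α) (ha : G.Adj v a) (hb : G.Adj v b) (hab : a ≠ b)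
    (hfab : f a = f b) : ∃ g, IsColoringOn G g (insert v S) ∧ S.EqOn g f := by
  classical
  have haN : a ∈ G.neighborFinset v := by simpa
  refine hf.exists_insert_of_card_lt hv (N := (G.neighborFinset v).erase a)
    ((card_erase_lt_of_mem haN).trans_le hd) fun s _ hvs ↦ ?_
  by_cases hsa : s = a
  · exact ⟨b, by simp [hab.symm, hb], by rw [hsa, hfab]⟩
  · exact ⟨s, by simp [hsa, hvs], rfl⟩

lemma exists_union_of_degree_lt (hf : IsColoringOn G f S) (hT : T.Finite)
    (hd : ∀ v ∈ T, G.degree v < Fintype.card α) : ∃ g : V → α, IsColoringOn G g (S ∪ T) := by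
  induction T, hT using Set.Finite.induction_on with
  | empty => exact ⟨f, by simpa⟩
  | @insert a T _ _ ih =>
    obtain ⟨g, hg⟩ := ih fun v hv ↦ hd v (Set.mem_insert_of_mem a hv)
    rw [Set.union_insert]
    by_cases ha : a ∈ S ∪ T
    · exact ⟨g, by rwa [Set.insert_eq_of_mem ha]⟩
    · obtain ⟨k, hk, -⟩ := hg.exists_insert_of_degree_lt ha (hd a (Set.mem_insert a T))
      exact ⟨k, hk⟩

-- Each vertex of `l` is coloured while its successor on the path is still uncoloured.
lemma exists_union_of_isChain (hd : ∀ v, G.degree v ≤ Fintype.card α) {l : List V}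
    (hf : IsColoringOn G f S) (hl : (l ++ [w]).IsChain G.Adj) (hnd : (l ++ [w]).Nodup)
    (hS : ∀ v ∈ l ++ [w], v ∉ S) :
    ∃ g, IsColoringOn G g (S ∪ {v | v ∈ l}) ∧ S.EqOn g f := by
  induction l generalizing f S with
  | nil => exact ⟨f, by simpa, Set.eqOn_refl f S⟩
  | cons a l ih =>
    obtain ⟨b, hb, hab⟩ : ∃ b ∈ l ++ [w], G.Adj a b := by
      cases l with
      | nil => exact ⟨w, by simp, by simpa using hl⟩
      | cons b l => exact ⟨b, by simp, hl.rel⟩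
    rw [List.cons_append] at hl hnd hS
    rw [List.nodup_cons] at hnd
    rw [List.forall_mem_cons] at hS
    obtain ⟨g, hg, hgf⟩ := hf.exists_insert_of_adj_notMem hS.1 (hd a) hab (hS.2 b hb)
    obtain ⟨k, hk, hkg⟩ := ih hg hl.tail hnd.2 (by grind)
    refine ⟨k, ?_, (hkg.mono (Set.subset_insert a S)).trans hgf⟩
    convert hk using 1
    ext v
    grind

lemma exists_union_cycle (hd : ∀ v, G.degree v ≤ Fintype.card α) (hf : IsColoringOn G f S)
    {c : Cycle V} (hc : c.Chain G.Adj) (hnd : c.Nodup) (hcS : ∀ v ∈ c, v ∉ S)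
    (hout : ∃ w ∈ c, ∃ x ∈ S, G.Adj w x) (hin : ∃ h ∈ c, ¬ ∃ x ∈ S, G.Adj h x) :
    ∃ g : V → α, IsColoringOn G g (S ∪ {v | v ∈ c}) := by
  obtain ⟨u, m, w, rfl, hu, x, hxS, hwx⟩ := exists_cycle_eq_coe_cons_concat hout hin
  rw [Cycle.chain_coe_cons] at hc
  rw [Cycle.nodup_coe_iff] at hnd
  simp only [Cycle.mem_coe_iff] at hcS ⊢
  have hm : (m ++ [w]).IsChain G.Adj := hc.infix ⟨[u], [u], by simp⟩
  have hwu : G.Adj w u := by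
    simpa using hc.infix (l₁ := [w, u]) ⟨u :: m, [], by simp⟩
  have huS : u ∉ S := hcS u (by simp)
  obtain ⟨g₁, hg₁, hg₁f, hg₁u⟩ := hf.exists_insert_of_ne huS (c := f x)
    fun s hs hus ↦ (hu ⟨s, hs, hus⟩).elim
  obtain ⟨g₂, hg₂, hg₂g₁⟩ := hg₁.exists_union_of_isChain hd hm hnd.tail (by grind)
  have hux : g₂ u = g₂ x := by
    rw [hg₂g₁ (Set.mem_insert u S), hg₂g₁ (Set.mem_insert_of_mem u hxS), hg₁u, hg₁f hxS]
  obtain ⟨g₃, hg₃, -⟩ := hg₂.exists_insert_of_adj_of_eq (v := w) (by grind) (hd w) hwu hwx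
    (fun h ↦ huS (h ▸ hxS)) hux
  refine ⟨g₃, ?_⟩
  convert hg₃ using 1
  ext v
  grind

end IsColoringOn

section Paths

lemma exists_isSuffix_forall_adj_mem [Finite V] {S : Set V} {l : List V} (hne : l ≠ [])
    (hl : l.IsChain G.Adj) (hnd : l.Nodup) (hS : ∀ v ∈ l, v ∈ S) :
    ∃ h t, l <:+ h :: t ∧ (h :: t).IsChain G.Adj ∧ (h :: t).Nodup ∧ (∀ v ∈ h :: t, v ∈ S) ∧
      ∀ a ∈ S, G.Adj h a → a ∈ t := by
  have := Fintype.ofFinite V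
  induction hk : Fintype.card V - l.length using Nat.strong_induction_on generalizing l with
  | _ k ih
  obtain ⟨h, t, rfl⟩ := List.exists_cons_of_ne_nil hne
  by_cases hmax : ∀ a ∈ S, G.Adj h a → a ∈ t
  · exact ⟨h, t, List.suffix_refl _, hl, hnd, hS, hmax⟩
  push Not at hmax
  obtain ⟨a, haS, hha, hat⟩ := hmax
  have hnd' : (a :: h :: t).Nodup := List.nodup_cons.2 ⟨by simp [hat, hha.ne'], hnd⟩
  have hlt : Fintype.card V - (a :: h :: t).length < k := by
    have := hnd'.length_le_card
    rw [List.length_cons] at this ⊢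
    omega
  obtain ⟨h', t', hsuf, hrest⟩ := ih _ hlt (List.cons_ne_nil a _)
    (hl.cons_cons hha.symm) hnd' (List.forall_mem_cons.2 ⟨haS, hS⟩) rfl
  exact ⟨h', t', (List.suffix_cons a _).trans hsuf, hrest⟩

lemma exists_cycle_of_forall_adj_mem {h b : V} {t : List V} (hl : (h :: t).IsChain G.Adj)
    (hnd : (h :: t).Nodup) (hhb : G.Adj h b) (hmem : ∀ a, G.Adj h a → a ∈ t) :
    ∃ c : Cycle V, c.Chain G.Adj ∧ c.Nodup ∧ h ∈ c ∧ (∀ a, G.Adj h a → a ∈ c) ∧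
      ∀ v ∈ c, v ∈ h :: t := by
  obtain ⟨as, a, bs, rfl, hha, hbs⟩ :=
    exists_eq_append_cons_of_exists_mem t ⟨b, hmem b hhb, hhb⟩
  have hpre : h :: (as ++ [a]) <+: h :: (as ++ a :: bs) := ⟨bs, by simp⟩
  refine ⟨↑(h :: (as ++ [a])), ?_, ?_, by simp, fun v hv ↦ ?_, fun v hv ↦ hpre.subset hv⟩
  · rw [Cycle.chain_coe_cons, ← List.cons_append]
    exact (hl.prefix hpre).append (List.isChain_singleton h)
      (by simpa [List.getLast?_cons] using hha.symm)
  · exact Cycle.nodup_coe_iff.2 (hnd.sublist hpre.sublist)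
  · have := hmem v hv
    have := hbs v
    simp only [Cycle.mem_coe_iff]
    grind

end Paths

section Brooks

lemma exists_adj_not_adj_of_cliqueFree {v : V} [Fintype (G.neighborSet v)]
    (hv : 3 ≤ G.degree v) (hK : G.CliqueFree (G.degree v + 1)) :
    ∃ x y z, G.Adj v x ∧ G.Adj v y ∧ G.Adj v z ∧ z ≠ x ∧ z ≠ y ∧ x ≠ y ∧ ¬ G.Adj x y := by
  classical
  have hclique : ¬ G.IsClique (G.neighborFinset v : Set V) := fun h ↦
    hK _ (SimpleGraph.IsNClique.insert ⟨h, rfl⟩ fun b hb ↦ (G.mem_neighborFinset v b).1 hb)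
  simp only [SimpleGraph.isClique_iff, Set.Pairwise] at hclique
  push Not at hclique
  obtain ⟨x, hx, y, hy, hxy, hnadj⟩ := hclique
  obtain ⟨z, hz, hzxy⟩ := exists_mem_notMem_of_card_lt_card
    (card_le_two.trans_lt (show 2 < #(G.neighborFinset v) from hv) : #{x, y} < _)
  exact ⟨x, y, z, by simpa using hx, by simpa using hy, by simpa using hz, by grind, by grind,
    hxy, hnadj⟩

variable [Fintype α] [G.LocallyFinite]

lemma exists_isColoringOn_of_isChain [Nonempty α] (hd : ∀ v, G.degree v ≤ Fintype.card α)
    {q : List V} {x y v z : V} (hl : (q ++ [y, v, x]).IsChain G.Adj) (hnd : (q ++ [y, v, x]).Nodup)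
    (hxy : ¬ G.Adj x y) (hvz : G.Adj v z) (hz : z ∈ q) :
    ∃ f : V → α, IsColoringOn G f {u | u ∈ q ++ [y, v, x]} := by
  obtain ⟨q₁, q₂, rfl⟩ := List.append_of_mem hz
  have hyvx : [y, v, x].IsChain G.Adj := hl.suffix ⟨q₁ ++ z :: q₂, rfl⟩
  obtain ⟨hyv, hvx⟩ : G.Adj y v ∧ G.Adj v x := by simpa using hyvx
  have hchain₁ : (q₂.reverse ++ [z]).IsChain G.Adj := by
    rw [← List.reverse_cons, List.isChain_reverse]
    exact (hl.infix ⟨q₁, [y, v, x], by simp⟩).imp fun _ _ h ↦ h.symm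
  have hchain₂ : ((q₁ ++ [z]) ++ [v]).IsChain G.Adj :=
    (hl.prefix ⟨q₂ ++ [y, v, x], by simp⟩).append (List.isChain_singleton v)
      (by simpa using hvz.symm)
  have hindep : G.IsIndepSet {x, y} := by
    simp [SimpleGraph.isIndepSet_iff, Set.pairwise_pair, hxy, G.adj_comm y x]
  simp only [List.append_assoc, List.cons_append, List.nodup_append, List.nodup_cons] at hnd
  have hf₀ := IsColoringOn.const hindep (Classical.arbitrary α)
  obtain ⟨f₁, hf₁, hf₁₀⟩ := hf₀.exists_union_of_isChain hd hchain₁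
    (by grind) (by grind)
  obtain ⟨f₂, hf₂, hf₂₁⟩ := hf₁.exists_union_of_isChain hd hchain₂
    (by grind) (by grind)
  have hx : x ∈ ({x, y} : Set V) := by simp
  have hy : y ∈ ({x, y} : Set V) := by simp
  have hfxy : f₂ x = f₂ y := by
    rw [hf₂₁ (.inl hx), hf₂₁ (.inl hy), hf₁₀ hx, hf₁₀ hy]
  obtain ⟨f₃, hf₃, -⟩ := hf₂.exists_insert_of_adj_of_eq (v := v) (by grind) (hd v) hvx
    hyv.symm (by grind) hfxy
  refine ⟨f₃, ?_⟩
  convert hf₃ using 1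
  ext u
  grind

lemma exists_isColoringOn_of_cycle (hd : ∀ v, G.degree v ≤ Fintype.card α) {S : Set V}
    {c : Cycle V} (hc : c.Chain G.Adj) (hnd : c.Nodup) (hcS : {v | v ∈ c} ⊂ S) {h : V}
    (hh : h ∈ c) (hadj : ∀ a, G.Adj h a → a ∈ c)
    (ih : ∀ T ⊂ S, ∃ f : V → α, IsColoringOn G f T) :
    ∃ f : V → α, IsColoringOn G f S := by
  rw [← Set.sdiff_union_of_subset hcS.subset]
  obtain ⟨f, hf⟩ := ih (S \ {v | v ∈ c}) (hcS.subset.sdiff_ssubset_of_nonempty ⟨h, hh⟩)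
  by_cases hout : ∃ w ∈ c, ∃ x ∈ S \ {v | v ∈ c}, G.Adj w x
  · exact hf.exists_union_cycle hd hc hnd (fun v hv hvS ↦ hvS.2 hv) hout
      ⟨h, hh, fun ⟨x, hx, hhx⟩ ↦ hx.2 (hadj x hhx)⟩
  · obtain ⟨g, hg⟩ := ih {v | v ∈ c} hcS
    exact hf.exists_union hg fun s hs t ht hst ↦ hout ⟨t, ht, s, hs, hst.symm⟩

lemma exists_isColoringOn_of_regular [Finite V] (hα : 3 ≤ Fintype.card α)
    (hK : G.CliqueFree (Fintype.card α + 1)) (hd : ∀ v, G.degree v ≤ Fintype.card α) {S : Set V}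
    (hreg : ∀ v ∈ S, G.degree v = Fintype.card α) (hclosed : ∀ v ∈ S, ∀ w, G.Adj v w → w ∈ S)
    {v : V} (hv : v ∈ S) (ih : ∀ T ⊂ S, ∃ f : V → α, IsColoringOn G f T) :
    ∃ f : V → α, IsColoringOn G f S := by
  have : Nonempty α := Fintype.card_pos_iff.1 (by omega)
  obtain ⟨x, y, z, hvx, hvy, hvz, hzx, hzy, hxy, hnadj⟩ :=
    exists_adj_not_adj_of_cliqueFree (v := v) (hα.trans_eq (hreg v hv).symm) (by rwa [hreg v hv])
  obtain ⟨h, t, ⟨q, hq⟩, hl, hnd, hS, hmem⟩ :=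
    exists_isSuffix_forall_adj_mem (G := G) (S := S) (l := [y, v, x]) (by simp)
      (by simp [hvx, hvy.symm]) (by simp [hvx.ne, hvy.ne', hxy.symm])
      (by simp [hv, hclosed v hv x hvx, hclosed v hv y hvy])
  have hhS : h ∈ S := hS h List.mem_cons_self
  replace hmem : ∀ a, G.Adj h a → a ∈ t := fun a ha ↦ hmem a (hclosed h hhS a ha) ha
  by_cases hcover : ∀ u ∈ S, u ∈ h :: t
  · have hzq : z ∈ q := by
      have := hcover z (hclosed v hv z hvz)
      rw [← hq] at this
      simpa [hzx, hzy, hvz.ne'] using this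
    have hSq : S = {u | u ∈ q ++ [y, v, x]} := by rw [hq]; exact Set.Subset.antisymm hcover hS
    rw [← hq] at hl hnd
    exact hSq ▸ exists_isColoringOn_of_isChain hd hl hnd hnadj hvz hzq
  · push Not at hcover
    obtain ⟨u, huS, hu⟩ := hcover
    obtain ⟨b, hhb⟩ := (G.degree_pos_iff_exists_adj h).1 (by have := hreg h hhS; omega)
    obtain ⟨c, hc, hcnd, hhc, hadj, hct⟩ := exists_cycle_of_forall_adj_mem hl hnd hhb hmem
    have hcS : {a | a ∈ c} ⊂ S :=
      (Set.ssubset_iff_of_subset fun a ha ↦ hS a (hct a ha)).2 ⟨u, huS, fun huc ↦ hu (hct u huc)⟩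
    exact exists_isColoringOn_of_cycle hd hc hcnd hcS hhc hadj ih

lemma exists_isColoringOn_of_cliqueFree [Finite V] (hα : 3 ≤ Fintype.card α)
    (hK : G.CliqueFree (Fintype.card α + 1)) (hd : ∀ v, G.degree v ≤ Fintype.card α) (S : Set V) :
    ∃ f : V → α, IsColoringOn G f S := by
  induction S using WellFoundedLT.induction with | _ S ih
  by_cases hlow : ∃ v ∈ S, G.degree v < Fintype.card α ∨ ∃ w, G.Adj v w ∧ w ∉ S
  · obtain ⟨v, hv, hvlow⟩ := hlow
    obtain ⟨f, hf⟩ := ih (S \ {v}) (Set.sdiff_singleton_ssubset.2 hv)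
    have hvS : v ∉ S \ {v} := fun h ↦ h.2 rfl
    rw [← Set.insert_sdiff_self_of_mem hv]
    obtain ⟨g, hg, -⟩ : ∃ g, IsColoringOn G g (insert v (S \ {v})) ∧ Set.EqOn g f (S \ {v}) := by
      rcases hvlow with hdeg | ⟨w, hvw, hw⟩
      · exact hf.exists_insert_of_degree_lt hvS hdeg
      · exact hf.exists_insert_of_adj_notMem hvS (hd v) hvw fun h ↦ hw h.1
    exact ⟨g, hg⟩
  push Not at hlow
  rcases S.eq_empty_or_nonempty with rfl | ⟨v, hv⟩
  · have : Nonempty α := Fintype.card_pos_iff.1 (by omega)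
    exact ⟨_, .const (S := ∅) (by simp) (Classical.arbitrary α)⟩
  · exact exists_isColoringOn_of_regular hα hK hd (fun v hv ↦ (hd v).antisymm (hlow v hv).1)
      (fun v hv ↦ (hlow v hv).2) hv ih

end Brooks

section Colorable

variable {k : ℕ}

theorem colorable_of_degree_le_of_cliqueFree [Finite V] [G.LocallyFinite] (hk : 3 ≤ k)
    (hd : ∀ v, G.degree v ≤ k) (hK : G.CliqueFree (k + 1)) : G.Colorable k := by
  obtain ⟨f, hf⟩ := exists_isColoringOn_of_cliqueFree (G := G) (α := Fin k) (by simpa)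
    (by simpa) (by simpa) Set.univ
  simpa using hf.colorable

theorem colorable_of_induce_le_degree [NeZero k] [Finite V] [G.LocallyFinite]
    (hG : (G.induce {v | k ≤ G.degree v}).Colorable k) : G.Colorable k := by
  obtain ⟨C⟩ := hG
  obtain ⟨f, hf⟩ := IsColoringOn.exists_of_induce_coloring C
  obtain ⟨g, hg⟩ := hf.exists_union_of_degree_lt (Set.toFinite {v | G.degree v < k}) (by simp)
  have huniv : {v | k ≤ G.degree v} ∪ {v | G.degree v < k} = Set.univ := by
    ext v
    simp [le_or_gt]
  rw [huniv] at hg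
  simpa using hg.colorable

theorem colorable_of_card_le_degree_le [NeZero k] [Fintype V] [G.LocallyFinite]
    (hc : #{v | k ≤ G.degree v} ≤ k) : G.Colorable k := by
  have : Fintype.card {v | k ≤ G.degree v} ≤ k := by
    simpa [Fintype.card_subtype] using hc
  exact colorable_of_induce_le_degree ((SimpleGraph.colorable_of_fintype _).mono this)

theorem colorable_succ_of_induce_ne {u : V} (hu : (G.induce {v | v ≠ u}).Colorable k) :
    G.Colorable (k + 1) := by
  classical
  obtain ⟨C⟩ := hu
  let f (v : V) : Option (Fin k) := if hv : v ≠ u then some (C ⟨v, hv⟩) else none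
  have hf {a b : V} (hab : G.Adj a b) : f a ≠ f b := by
    have hC (ha : a ≠ u) (hb : b ≠ u) : C ⟨a, ha⟩ ≠ C ⟨b, hb⟩ := C.valid hab
    grind [G.ne_of_adj hab]
  simpa using (SimpleGraph.Coloring.mk f hf).colorable

end Colorable

section Matrix

lemma exists_coloring_apply_ne [Nontrivial V] [Nontrivial α] (C : G.Coloring α) :
    ∃ (C' : G.Coloring α) (a b : V), C' a ≠ C' b := by
  classical
  by_cases hC : ∃ a b, C a ≠ C b
  · exact ⟨C, hC⟩
  push Not at hC
  obtain ⟨a, b, hab⟩ := exists_pair_ne V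
  obtain ⟨c, d, hcd⟩ := exists_pair_ne α
  exact ⟨.mk (fun v ↦ if v = a then c else d) fun {u v} huv ↦ (C.valid huv (hC u v)).elim, a, b,
    by simpa [SimpleGraph.Coloring.mk, hab.symm] using hcd⟩

lemma linearIndependent_zmod_two_pair {M : Type*} [AddCommGroup M] [Module (ZMod 2) M] {x y : M}
    (hx : x ≠ 0) (hy : y ≠ 0) (hxy : x ≠ y) : LinearIndependent (ZMod 2) ![x, y] := by
  rw [LinearIndependent.pair_iff' hx]
  intro a
  obtain rfl | rfl := (by decide : ∀ a : ZMod 2, a = 0 ∨ a = 1) a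
  · simpa using hy.symm
  · simpa using hxy

lemma rank_eq_two_of_col_ne [Fintype V] {X : Matrix (Fin 2) V (ZMod 2)} {j k : V}
    (hj : X.col j ≠ 0) (hk : X.col k ≠ 0) (hjk : X.col j ≠ X.col k) : X.rank = 2 := by
  refine le_antisymm (by simpa using X.rank_le_card_height) ?_
  rw [X.rank_eq_finrank_span_cols]
  calc 2 = Module.finrank (ZMod 2) (Submodule.span (ZMod 2) (Set.range ![X.col j, X.col k])) := by
        rw [finrank_span_eq_card (linearIndependent_zmod_two_pair hj hk hjk), Fintype.card_fin]
    _ ≤ _ := Submodule.finrank_mono (Submodule.span_mono (by simp [Set.insert_subset_iff]))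

lemma exists_matrix_of_colorable [Fintype V] [Nontrivial V] (hG : G.Colorable 3) :
    ∃ X : Matrix (Fin 2) V (ZMod 2), X.rank = 2 ∧ (∀ j, X.col j ≠ 0) ∧
      ∀ j k, G.Adj j k → X.col j ≠ X.col k := by
  have hcard : Fintype.card {x : Fin 2 → ZMod 2 // x ≠ 0} = 3 := by decide
  have : Nontrivial {x : Fin 2 → ZMod 2 // x ≠ 0} :=
    Fintype.one_lt_card_iff_nontrivial.1 (by omega)
  obtain ⟨C, a, b, hab⟩ := exists_coloring_apply_ne (hG.toColoring hcard.ge)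
  exact ⟨.of fun i j ↦ (C j).1 i, rank_eq_two_of_col_ne (C a).2 (C b).2 (Subtype.coe_ne_coe.2 hab),
    fun j ↦ (C j).2, fun j k hjk ↦ Subtype.coe_ne_coe.2 (C.valid hjk)⟩

end Matrix

theorem stmt9_general {V : Type*} [Fintype V] [Nontrivial V]
    (G : SimpleGraph V) [DecidableRel G.Adj]
    (h : ((∀ v : V, G.degree v ≤ 3) ∧ G.CliqueFree 4) ∨
      (Finset.univ.filter (fun v : V => 3 ≤ G.degree v)).card ≤ 3 ∨
      (∃ u : V, (G.induce {v : V | v ≠ u}).IsBipartite)) :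
    ∃ X : Matrix (Fin 2) V (ZMod 2),
      X.rank = 2 ∧
      (∀ j : V, (fun i => X i j) ≠ 0) ∧
      (∀ j k : V, G.Adj j k → (fun i => X i j) ≠ (fun i => X i k)) := by
  apply exists_matrix_of_colorable
  rcases h with ⟨hd, hK⟩ | hc | ⟨u, hu⟩
  · exact colorable_of_degree_le_of_cliqueFree le_rfl hd hK
  · exact colorable_of_card_le_degree_le hc
  · exact colorable_succ_of_induce_ne hu

/-- Theorem 5 (blocks of size four): if the requirements graph `G` satisfies
(i) maximum degree at most 3 and no clique on 4 vertices, or (ii) at most three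
vertices of degree at least 3, or (iii) there is a vertex `u` whose removal leaves an
acyclic graph, then a `2^n` factorial in blocks of size four exists from which all
main effects and all interactions of `G` are estimable. -/
theorem stmt9 (n : ℕ) (hn : 2 ≤ n)
    (G : SimpleGraph (Fin n)) [DecidableRel G.Adj]
    (h : ((∀ v : Fin n, G.degree v ≤ 3) ∧ G.CliqueFree 4) ∨
      (Finset.univ.filter (fun v : Fin n => 3 ≤ G.degree v)).card ≤ 3 ∨
      (∃ u : Fin n, (G.induce {v : Fin n | v ≠ u}).IsAcyclic)) :
    ∃ X : Matrix (Fin 2) (Fin n) (ZMod 2),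
      X.rank = 2 ∧
      (∀ j : Fin n, (fun i => X i j) ≠ 0) ∧
      (∀ j k : Fin n, G.Adj j k → (fun i => X i j) ≠ (fun i => X i k)) := by
  have : Nontrivial (Fin n) := Fin.nontrivial_iff_two_le.2 hn
  exact stmt9_general G (h.imp_right (Or.imp_right fun ⟨u, hu⟩ ↦ ⟨u, hu.isBipartite⟩))
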